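/- Let k be a field of characteristic p ≥ 3 and let D be the k-derivation on k[x,y,z] defined by D(x) = 0, D(y) = x, D(z) = y. Then the invariant ring k[x,y,z]^D equals k[x, y^p, z^p, y^2 - 2xz], and it is isomorphic to k[X,Y,Z,W]/(Y^2 - W^p - X^p Z) via X ↦ 2x, Y ↦ y^p, Z ↦ z^p, W ↦ y^2 - 2xz. -/

import Mathlib

open MvPolynomial

/-- The invariant subalgebra `R^D = ker D` of a derivation. -/
def invariants {k : Type*} [CommRing k] {d : ℕ}
    (D : Derivation k (MvPolynomial (Fin d) k) (MvPolynomial (Fin d) k)) :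
    Subalgebra k (MvPolynomial (Fin d) k) where
  carrier := {f | D f = 0}
  mul_mem' := by
    intro a b ha hb
    simp only [Set.mem_setOf_eq] at ha hb ⊢
    rw [Derivation.leibniz, ha, hb, smul_zero, smul_zero, add_zero]
  add_mem' := by
    intro a b ha hb
    simp only [Set.mem_setOf_eq] at ha hb ⊢
    rw [map_add, ha, hb, add_zero]
  algebraMap_mem' := fun r => by
    simp only [Set.mem_setOf_eq, Derivation.map_algebraMap]

/-- The derivation on `k[x,y,z]` with `D x = 0`, `D y = x`, `D z = y`. -/
noncomputable def D6 (k : Type*) [CommRing k] :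
    Derivation k (MvPolynomial (Fin 3) k) (MvPolynomial (Fin 3) k) :=
  MvPolynomial.mkDerivation k ![0, X 0, X 1]

namespace S6

variable {k : Type*} [Field k]

/-- `φ : k[X,Y,Z,W] → k[x,y,z]` -/
noncomputable def phi (k : Type*) [Field k] (p : ℕ) :
    MvPolynomial (Fin 4) k →ₐ[k] MvPolynomial (Fin 3) k :=
  aeval ![2 * X 0, X 1 ^ p, X 2 ^ p, X 1 ^ 2 - 2 * (X 0 * X 2)]

/-- inclusion of `k[X,Z,W]` -/
noncomputable def iota (k : Type*) [Field k] :
    MvPolynomial (Fin 3) k →ₐ[k] MvPolynomial (Fin 4) k :=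
  aeval ![X 0, X 2, X 3]

/-- restriction of phi to `k[X,Z,W]` -/
noncomputable def psi (k : Type*) [Field k] (p : ℕ) :
    MvPolynomial (Fin 3) k →ₐ[k] MvPolynomial (Fin 3) k :=
  aeval ![2 * X 0, X 2 ^ p, X 1 ^ 2 - 2 * (X 0 * X 2)]

/-- set the first variable to zero -/
noncomputable def sig (k : Type*) [Field k] :
    MvPolynomial (Fin 3) k →ₐ[k] MvPolynomial (Fin 3) k :=
  aeval ![0, X 1, X 2]

/-- change the sign of `y` -/
noncomputable def neg1 (k : Type*) [Field k] :
    MvPolynomial (Fin 3) k →ₐ[k] MvPolynomial (Fin 3) k :=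
  aeval ![X 0, - X 1, X 2]

/-- monomial map -/
noncomputable def theta (k : Type*) [Field k] (p : ℕ) :
    MvPolynomial (Fin 3) k →ₐ[k] MvPolynomial (Fin 3) k :=
  aeval ![X 0, X 2 ^ p, X 1 ^ 2]

/-- the map `x, y, w` -/
noncomputable def alpha (k : Type*) [Field k] :
    MvPolynomial (Fin 3) k →ₐ[k] MvPolynomial (Fin 3) k :=
  aeval ![X 0, X 1, X 1 ^ 2 - 2 * (X 0 * X 2)]

/-- the relation -/
noncomputable def rel (k : Type*) [Field k] (p : ℕ) : MvPolynomial (Fin 4) k :=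
  (X 1) ^ 2 - (X 3) ^ p - (X 0) ^ p * X 2

theorem phi_iota (p : ℕ) (a : MvPolynomial (Fin 3) k) : phi k p (iota k a) = psi k p a := by
  have : (phi k p).comp (iota k) = psi k p := by
    ext i : 1
    fin_cases i <;> simp [phi, iota, psi]
  exact DFunLike.congr_fun this a

theorem theta_inj (p : ℕ) (hp : 0 < p) : Function.Injective (theta k p) := by
  have h := MvPolynomial.algebraicIndependent_polynomial_aeval_X (R := k) (ι := Fin 3)
    ![Polynomial.X, Polynomial.X ^ 2, Polynomial.X ^ p] (by
      intro i
      fin_cases i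
      · exact Polynomial.transcendental_X k
      · exact (Polynomial.transcendental_X k).pow (by norm_num)
      · exact (Polynomial.transcendental_X k).pow hp)
  have h2 := h.comp (Equiv.swap (1 : Fin 3) 2) (Equiv.injective _)
  have e : theta k p = aeval ((fun i ↦ Polynomial.aeval (X i : MvPolynomial (Fin 3) k)
    ((![Polynomial.X, Polynomial.X ^ 2, Polynomial.X ^ p] : Fin 3 → Polynomial k) i)) ∘
      (Equiv.swap (1 : Fin 3) 2)) := by
    ext i : 1
    fin_cases i
    · simp [theta, Equiv.swap_apply_of_ne_of_ne]
    · simp [theta]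
    · simp [theta]
  rw [e]
  exact h2

theorem sub_sig (a : MvPolynomial (Fin 3) k) : (X 0) ∣ a - sig k a := by
  induction a using MvPolynomial.induction_on with
  | C c => simp [sig]
  | add f g hf hg =>
    rw [map_add]
    have := dvd_add hf hg
    convert this using 1
    ring
  | mul_X f i hf =>
    rw [map_mul]
    fin_cases i
    · simp [sig]
    · have : sig k (X 1) = X 1 := by simp [sig]
      simp only [Fin.mk_one]
      rw [this, ← sub_mul]
      exact hf.mul_right _
    · have : sig k (X 2) = X 2 := by simp [sig]
      simp only [Fin.reduceFinMk]
      rw [this, ← sub_mul]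
      exact hf.mul_right _

theorem sig_psi (p : ℕ) (a : MvPolynomial (Fin 3) k) :
    sig k (psi k p a) = theta k p (sig k a) := by
  have : (sig k).comp (psi k p) = (theta k p).comp (sig k) := by
    ext i : 1
    fin_cases i <;> simp [sig, theta, psi]
  exact DFunLike.congr_fun this a

theorem neg1_theta (p : ℕ) (a : MvPolynomial (Fin 3) k) :
    neg1 k (theta k p a) = theta k p a := by
  have : (neg1 k).comp (theta k p) = (theta k p) := by
    ext i : 1
    fin_cases i <;> simp [neg1, theta]
  exact DFunLike.congr_fun this a

theorem two_ne (p : ℕ) [Fact p.Prime] (hp3 : 3 ≤ p) (k : Type*) [Field k] [CharP k p] :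
    (2 : k) ≠ 0 := by
  intro h
  have := (CharP.cast_eq_zero_iff k p 2).1 (by exact_mod_cast h)
  have := Nat.le_of_dvd (by norm_num) this
  omega

theorem two_ne_poly (h2 : (2 : k) ≠ 0) (σ : Type*) : (2 : MvPolynomial σ k) ≠ 0 := by
  have : (2 : MvPolynomial σ k) = C 2 := (map_ofNat C 2).symm
  rw [this]
  simpa using h2

theorem dvd_key (p : ℕ) [Fact p.Prime] (hp3 : 3 ≤ p) [CharP k p] (a b : MvPolynomial (Fin 3) k)
    (h : X 0 ∣ psi k p a + psi k p b * X 1 ^ p) : X 0 ∣ a ∧ X 0 ∣ b := by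
  have h2 := two_ne_poly (two_ne p hp3 k) (Fin 3)
  have hodd : Odd p := (Fact.out : p.Prime).odd_of_ne_two (by omega)
  obtain ⟨c, hc⟩ := h
  have e1 : theta k p (sig k a) + theta k p (sig k b) * X 1 ^ p = 0 := by
    have := congrArg (sig k) hc
    rw [map_add, map_mul, sig_psi, sig_psi, map_mul] at this
    simpa [sig] using this
  have e2 : theta k p (sig k a) - theta k p (sig k b) * X 1 ^ p = 0 := by
    have := congrArg (neg1 k) e1
    rw [map_add, map_mul, neg1_theta, neg1_theta] at this
    simpa [neg1, hodd.neg_pow, sub_eq_add_neg] using this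
  have e3 : theta k p (sig k a) = 0 := by
    have : 2 * theta k p (sig k a) = 0 := by linear_combination e1 + e2
    exact (mul_eq_zero.1 this).resolve_left h2
  have e4 : theta k p (sig k b) = 0 := by
    rw [e3, zero_add] at e1
    exact (mul_eq_zero.1 e1).resolve_right (pow_ne_zero _ (X_ne_zero _))
  have inj := theta_inj (k := k) p (by omega)
  have a0 : sig k a = 0 := inj (by rw [e3, map_zero])
  have b0 : sig k b = 0 := inj (by rw [e4, map_zero])
  constructor
  · simpa [a0] using sub_sig a
  · simpa [b0] using sub_sig b

theorem normal_form (p : ℕ) (F : MvPolynomial (Fin 4) k) :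
    ∃ a b, rel k p ∣ F - (iota k a + iota k b * X 1) := by
  induction F using MvPolynomial.induction_on with
  | C c => exact ⟨C c, 0, by simp [iota]⟩
  | add f g hf hg =>
    obtain ⟨a, b, q, h⟩ := hf
    obtain ⟨a', b', q', h'⟩ := hg
    refine ⟨a + a', b + b', q + q', ?_⟩
    simp only [map_add]
    linear_combination h + h'
  | mul_X f i hf =>
    obtain ⟨a, b, q, h⟩ := hf
    have i0 : iota k (X 0) = X 0 := by simp [iota]
    have i1 : iota k (X 1) = X 2 := by simp [iota]
    have i2 : iota k (X 2) = X 3 := by simp [iota]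
    fin_cases i
    · refine ⟨a * X 0, b * X 0, q * X 0, ?_⟩
      simp only [map_mul, i0, Fin.zero_eta]
      linear_combination X 0 * h
    · refine ⟨b * (X 2 ^ p + X 0 ^ p * X 1), a, q * X 1 + iota k b, ?_⟩
      simp only [map_mul, map_add, map_pow, i0, i1, i2, Fin.mk_one]
      have hr : rel k p = (X 1) ^ 2 - (X 3) ^ p - (X 0) ^ p * X 2 := rfl
      linear_combination X 1 * h - iota k b * hr
    · refine ⟨a * X 1, b * X 1, q * X 2, ?_⟩
      simp only [map_mul, i1, Fin.reduceFinMk]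
      linear_combination X 2 * h
    · refine ⟨a * X 2, b * X 2, q * X 3, ?_⟩
      simp only [map_mul, i2, Fin.reduceFinMk]
      linear_combination X 3 * h

theorem phi_rel (p : ℕ) [Fact p.Prime] [CharP k p] : phi k p (rel k p) = 0 := by
  simp only [phi, rel, map_sub, map_pow, map_mul, aeval_X]
  simp only [Matrix.cons_val]
  rw [sub_pow_char]
  ring

theorem phi_nf (p : ℕ) [Fact p.Prime] [CharP k p] (F : MvPolynomial (Fin 4) k) :
    ∃ a b, rel k p ∣ F - (iota k a + iota k b * X 1) ∧
      phi k p F = psi k p a + psi k p b * X 1 ^ p := by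
  obtain ⟨a, b, h⟩ := normal_form p F
  refine ⟨a, b, h, ?_⟩
  obtain ⟨q, h⟩ := h
  have := congrArg (phi k p) h
  rw [map_mul, phi_rel, map_sub, map_add, map_mul, phi_iota, phi_iota] at this
  have h1 : phi k p (X 1) = X 1 ^ p := by simp [phi]
  rw [h1] at this
  linear_combination this

theorem psi_X0 (p : ℕ) : psi k p (X 0) = 2 * X 0 := by simp [psi]

theorem descend (p : ℕ) [Fact p.Prime] (hp3 : 3 ≤ p) [CharP k p] (f : MvPolynomial (Fin 3) k)
    (h : X 0 * f ∈ (phi k p).range) : f ∈ (phi k p).range := by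
  obtain ⟨F, hF⟩ := h
  obtain ⟨a, b, -, e⟩ := phi_nf p F
  have hF' : phi k p F = X 0 * f := hF
  obtain ⟨⟨a, rfl⟩, ⟨b, rfl⟩⟩ := dvd_key p hp3 a b ⟨f, by rw [← e, hF']⟩
  rw [hF', map_mul, map_mul, psi_X0] at e
  have : f = phi k p (2 * (iota k a + iota k b * X 1)) := by
    have h1 : phi k p (X 1) = X 1 ^ p := by simp [phi]
    rw [map_mul, map_add, map_mul, phi_iota, phi_iota, h1, map_ofNat]
    apply mul_left_cancel₀ (X_ne_zero (R := k) (0 : Fin 3))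
    linear_combination e
  exact ⟨_, this.symm⟩

theorem pow_dvd_all (p : ℕ) [Fact p.Prime] (hp3 : 3 ≤ p) [CharP k p] (n : ℕ) :
    ∀ (a b : MvPolynomial (Fin 3) k), psi k p a + psi k p b * X 1 ^ p = 0 →
      X 0 ^ n ∣ a ∧ X 0 ^ n ∣ b := by
  induction n with
  | zero => intro a b _; simp
  | succ n ih =>
    intro a b h
    obtain ⟨⟨a, rfl⟩, ⟨b, rfl⟩⟩ := dvd_key p hp3 a b (by rw [h]; exact dvd_zero _)
    rw [map_mul, map_mul, psi_X0] at h
    have h2 := two_ne_poly (two_ne p hp3 k) (Fin 3)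
    have : (2 * X 0) * (psi k p a + psi k p b * X 1 ^ p) = 0 := by linear_combination h
    obtain ⟨h3, h4⟩ := ih a b
      ((mul_eq_zero.1 this).resolve_left (mul_ne_zero h2 (X_ne_zero _)))
    rw [pow_succ']
    exact ⟨mul_dvd_mul_left _ h3, mul_dvd_mul_left _ h4⟩

theorem zero_of_pow_dvd (a : MvPolynomial (Fin 3) k) (h : ∀ n, X 0 ^ n ∣ a) : a = 0 := by
  by_contra ha
  obtain ⟨n, hn⟩ := FiniteMultiplicity.of_prime_left (X_prime (R := k) (i := (0 : Fin 3))) ha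
  exact hn (h _)

theorem ker_phi (p : ℕ) [Fact p.Prime] (hp3 : 3 ≤ p) [CharP k p] :
    RingHom.ker (phi k p).toRingHom = Ideal.span {rel k p} := by
  apply le_antisymm
  · intro F hF
    have hF' : phi k p F = 0 := hF
    obtain ⟨a, b, h, e⟩ := phi_nf p F
    rw [hF'] at e
    have ha := zero_of_pow_dvd a fun n => (pow_dvd_all p hp3 n a b e.symm).1
    have hb := zero_of_pow_dvd b fun n => (pow_dvd_all p hp3 n a b e.symm).2
    subst ha hb
    rw [Ideal.mem_span_singleton]
    simpa using h
  · rw [Ideal.span_singleton_le_iff_mem]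
    exact phi_rel p

theorem alpha_inj (h2 : (2 : k) ≠ 0) : Function.Injective (alpha k) := by
  let K := FractionRing (MvPolynomial (Fin 3) k)
  let u : MvPolynomial (Fin 3) k → K := algebraMap _ _
  have uinj : Function.Injective u := IsFractionRing.injective _ _
  let γ : MvPolynomial (Fin 3) k →ₐ[k] K :=
    aeval ![u (X 0), u (X 1), (u (X 1) ^ 2 - u (X 2)) / (2 * u (X 0))]
  have hx : u (X 0) ≠ 0 := by
    intro h
    exact X_ne_zero (R := k) (0 : Fin 3) (uinj (by rw [h]; exact (map_zero (algebraMap _ K)).symm))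
  have h2K : (2 : K) ≠ 0 := by
    intro h
    apply two_ne_poly h2 (Fin 3)
    apply uinj
    have e1 : u 2 = 2 := map_ofNat (algebraMap _ K) 2
    have e2 : u 0 = 0 := map_zero (algebraMap _ K)
    rw [e1, e2, h]
  have hcomp : γ.comp (alpha k) = IsScalarTower.toAlgHom k (MvPolynomial (Fin 3) k) K := by
    ext i : 1
    fin_cases i
    · simp [γ, alpha, u]
    · simp [γ, alpha, u]
    · simp only [γ, alpha, AlgHom.comp_apply, aeval_X, Fin.reduceFinMk, Matrix.cons_val,
        map_sub, map_pow, map_mul, map_ofNat]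
      have h3 : 2 * (u (X 0) * ((u (X 1) ^ 2 - u (X 2)) / (2 * u (X 0)))) =
          u (X 1) ^ 2 - u (X 2) := by
        rw [← mul_assoc, mul_div_cancel₀ _ (mul_ne_zero h2K hx)]
      rw [h3, sub_sub_cancel]
      rfl
  intro a b hab
  apply uinj
  have := congrArg γ hab
  rw [← AlgHom.comp_apply, ← AlgHom.comp_apply, hcomp] at this
  exact this

theorem D6_X0 : D6 k (X 0) = 0 := by simp [D6, mkDerivation_X]
theorem D6_X1 : D6 k (X 1) = X 0 := by simp [D6, mkDerivation_X]
theorem D6_X2 : D6 k (X 2) = X 1 := by simp [D6, mkDerivation_X]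

theorem D6_w : D6 k ((X 1) ^ 2 - 2 * (X 0 * X 2)) = 0 := by
  have : (X 1 : MvPolynomial (Fin 3) k) ^ 2 - 2 * (X 0 * X 2)
    = X 1 * X 1 - (X 0 * X 2 + X 0 * X 2) := by ring
  rw [this]
  simp only [map_sub, map_add, Derivation.leibniz, D6_X0, D6_X1, D6_X2, smul_eq_mul]
  ring

theorem D6_alpha (g : MvPolynomial (Fin 3) k) :
    D6 k (alpha k g) = X 0 * alpha k (pderiv 1 g) := by
  induction g using MvPolynomial.induction_on with
  | C c =>
    have : alpha k (C c) = algebraMap k _ c := by simp [alpha, algebraMap_eq]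
    rw [this]; simp
  | add f g hf hg => simp only [map_add, hf, hg]; ring
  | mul_X f i hf =>
    rw [map_mul, Derivation.leibniz, Derivation.leibniz, hf, map_add, smul_eq_mul, smul_eq_mul,
      smul_eq_mul, smul_eq_mul, map_mul, map_mul]
    have : D6 k (alpha k (X i)) = X 0 * alpha k (pderiv 1 (X i)) := by
      fin_cases i
      · have : alpha k (X 0) = X 0 := by simp [alpha]
        simp only [Fin.zero_eta]
        rw [this, D6_X0, pderiv_X_of_ne (by decide)]; simp
      · have : alpha k (X 1) = X 1 := by simp [alpha]
        simp only [Fin.mk_one]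
        rw [this, D6_X1, pderiv_X_self]; simp
      · have : alpha k (X 2) = (X 1) ^ 2 - 2 * (X 0 * X 2) := by simp [alpha]
        simp only [Fin.reduceFinMk]
        rw [this, D6_w, pderiv_X_of_ne (by decide)]; simp
    rw [this]
    ring

theorem clear_denom (h2 : (2 : k) ≠ 0) (f : MvPolynomial (Fin 3) k) :
    ∃ N : ℕ, ∃ g, X 0 ^ N * f = alpha k g := by
  have a0 : alpha k (X 0) = X 0 := by simp [alpha]
  have a1 : alpha k (X 1) = X 1 := by simp [alpha]
  have a2 : alpha k (X 2) = (X 1) ^ 2 - 2 * (X 0 * X 2) := by simp [alpha]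
  induction f using MvPolynomial.induction_on with
  | C c => exact ⟨0, C c, by simp [alpha, algebraMap_eq]⟩
  | add f g hf hg =>
    obtain ⟨N, f', hf⟩ := hf
    obtain ⟨M, g', hg⟩ := hg
    refine ⟨N + M, X 0 ^ M * f' + X 0 ^ N * g', ?_⟩
    rw [map_add, map_mul, map_mul, ← hf, ← hg, map_pow, map_pow, a0]
    ring
  | mul_X f i hf =>
    obtain ⟨N, f', hf⟩ := hf
    fin_cases i
    · exact ⟨N, f' * X 0, by simp only [Fin.zero_eta]; rw [map_mul, ← hf, a0]; ring⟩
    · exact ⟨N, f' * X 1, by simp only [Fin.mk_one]; rw [map_mul, ← hf, a1]; ring⟩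
    · refine ⟨N + 1, f' * (C (2⁻¹) * (X 1 ^ 2 - X 2)), ?_⟩
      have hC : alpha k (C 2⁻¹) = C 2⁻¹ := by simp [alpha, algebraMap_eq]
      have hC2 : (C 2⁻¹ : MvPolynomial (Fin 3) k) * 2 = 1 := by
        have : (2 : MvPolynomial (Fin 3) k) = C 2 := (map_ofNat C 2).symm
        rw [this, ← C_mul, inv_mul_cancel₀ h2, C_1]
      simp only [Fin.reduceFinMk]
      rw [map_mul, ← hf, map_mul, map_sub, map_pow, a1, a2, hC]
      linear_combination -(X 0 ^ (N + 1) * f * X 2) * hC2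

theorem adjoin_eq (p : ℕ) (h2 : (2 : k) ≠ 0) :
    Algebra.adjoin k {X 0, (X 1) ^ p, (X 2) ^ p, (X 1) ^ 2 - 2 * (X 0 * X 2)} =
      (phi k p).range := by
  have hC2 : (C 2⁻¹ : MvPolynomial (Fin 3) k) * 2 = 1 := by
    have : (2 : MvPolynomial (Fin 3) k) = C 2 := (map_ofNat C 2).symm
    rw [this, ← C_mul, inv_mul_cancel₀ h2, C_1]
  apply le_antisymm
  · rw [Algebra.adjoin_le_iff]
    rintro f (rfl | rfl | rfl | rfl)
    · refine ⟨C 2⁻¹ * X 0, ?_⟩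
      change phi k p _ = _
      have : phi k p (X 0) = 2 * X 0 := by simp [phi]
      have h' : phi k p (C 2⁻¹) = C 2⁻¹ := by simp [phi, algebraMap_eq]
      rw [map_mul, this, h', ← mul_assoc, hC2, one_mul]
    · exact ⟨X 1, by simp [phi]⟩
    · exact ⟨X 2, by simp [phi]⟩
    · exact ⟨X 3, by simp [phi]⟩
  · rw [phi, ← Algebra.adjoin_range_eq_range_aeval, Algebra.adjoin_le_iff]
    rintro _ ⟨i, rfl⟩
    have two_mem : (2 : MvPolynomial (Fin 3) k) ∈ Algebra.adjoin k
      {X 0, (X 1) ^ p, (X 2) ^ p, (X 1) ^ 2 - 2 * (X 0 * X 2)} := ofNat_mem _ 2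
    fin_cases i
    · exact mul_mem two_mem (Algebra.subset_adjoin (by simp))
    · exact Algebra.subset_adjoin (by simp)
    · exact Algebra.subset_adjoin (by simp)
    · exact Algebra.subset_adjoin (by simp)

theorem alpha_mem (p : ℕ) [Fact p.Prime] [CharP k p] (h2 : (2 : k) ≠ 0)
    (g : MvPolynomial (Fin 3) k) (hg : pderiv 1 g = 0) : alpha k g ∈ (phi k p).range := by
  rw [← adjoin_eq p h2]
  rw [g.as_sum, map_sum]
  refine sum_mem fun m hm => ?_
  have hdvd : p ∣ m 1 := by
    rcases Nat.eq_zero_or_pos (m 1) with h0 | h0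
    · rw [h0]; exact dvd_zero _
    have hc := coeff_pderiv (i := 1) g (m - Finsupp.single 1 1)
    have hm' : m - Finsupp.single 1 1 + Finsupp.single 1 1 = m := by
      apply tsub_add_cancel_of_le
      simpa using Nat.succ_le_of_lt h0
    rw [hg, hm', coeff_zero] at hc
    have hc' := (mul_eq_zero.1 hc.symm).resolve_left (mem_support_iff.1 hm)
    rw [← CharP.cast_eq_zero_iff k p, ← hc']
    have : m 1 = (m - Finsupp.single 1 1 : Fin 3 →₀ ℕ) 1 + 1 := by simp; omega
    conv_lhs => rw [this]
    push_cast
    rfl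
  obtain ⟨l, hl⟩ := hdvd
  rw [alpha, aeval_monomial, Finsupp.prod_fintype _ _ (by simp), Fin.prod_univ_three, hl]
  simp only [Matrix.cons_val]
  refine mul_mem (Subalgebra.algebraMap_mem _ _) (mul_mem (mul_mem ?_ ?_) ?_)
  · exact pow_mem (Algebra.subset_adjoin (by simp)) _
  · rw [pow_mul]
    exact pow_mem (Algebra.subset_adjoin (by simp)) _
  · exact pow_mem (Algebra.subset_adjoin (by simp)) _

theorem inv_eq (p : ℕ) [Fact p.Prime] (hp3 : 3 ≤ p) [CharP k p] :
    invariants (D6 k) = (phi k p).range := by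
  have h2 := two_ne p hp3 k
  apply le_antisymm
  · intro f hf
    have hf' : D6 k f = 0 := hf
    obtain ⟨N, g, e⟩ := clear_denom h2 f
    have hD : D6 k (alpha k g) = 0 := by
      rw [← e, Derivation.leibniz, hf', Derivation.leibniz_pow, D6_X0]
      simp
    rw [D6_alpha] at hD
    have h3 := (mul_eq_zero.1 hD).resolve_left (X_ne_zero _)
    have h4 : pderiv 1 g = 0 := alpha_inj h2 (by rw [h3, map_zero])
    have h5 := alpha_mem p h2 g h4
    rw [← e] at h5
    clear e
    induction N with
    | zero => simpa using h5
    | succ n ih =>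
      apply ih
      apply descend p hp3
      rwa [← mul_assoc, ← pow_succ']
  · rw [← adjoin_eq p h2, Algebra.adjoin_le_iff]
    have hpow : ∀ q : MvPolynomial (Fin 3) k, D6 k (q ^ p) = 0 := by
      intro q
      rw [Derivation.leibniz_pow]
      rw [← Nat.cast_smul_eq_nsmul k, CharP.cast_eq_zero, zero_smul]
    rintro f (rfl | rfl | rfl | rfl)
    · exact D6_X0
    · exact hpow _
    · exact hpow _
    · exact D6_w

end S6

/-- For `p ≥ 3` and `D x = 0, D y = x, D z = y` on `k[x,y,z]` in characteristic `p`, the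
invariant ring is `k[x, y^p, z^p, y² - 2xz]`, isomorphic to
`k[X,Y,Z,W]/(Y² - W^p - X^p Z)` via `X ↦ 2x, Y ↦ y^p, Z ↦ z^p, W ↦ y² - 2xz`. -/
theorem stmt6 (p : ℕ) [Fact p.Prime] (hp3 : 3 ≤ p) (k : Type*) [Field k] [CharP k p] :
    invariants (D6 k) =
      Algebra.adjoin k {X 0, (X 1) ^ p, (X 2) ^ p, (X 1) ^ 2 - 2 * (X 0 * X 2)} ∧
    ∃ φ : MvPolynomial (Fin 4) k →ₐ[k] MvPolynomial (Fin 3) k,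
      φ (X 0) = 2 * X 0 ∧ φ (X 1) = (X 1) ^ p ∧ φ (X 2) = (X 2) ^ p ∧
      φ (X 3) = (X 1) ^ 2 - 2 * (X 0 * X 2) ∧
      RingHom.ker φ.toRingHom = Ideal.span {(X 1) ^ 2 - (X 3) ^ p - (X 0) ^ p * X 2} ∧
      φ.range = invariants (D6 k) := by
  have h2 := S6.two_ne p hp3 k
  refine ⟨by rw [S6.adjoin_eq p h2, S6.inv_eq p hp3], S6.phi k p, ?_, ?_, ?_, ?_,
    S6.ker_phi p hp3, (S6.inv_eq p hp3).symm⟩ <;> simp [S6.phi]
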